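/- arXiv:2302.01478 — 2 statements merged into one kernel-verified Lean document; each statement's English description precedes it below -/
import Mathlib

section
/- Let S₁, S₂ ∈ {0,1}^{M×K} be cluster assignment matrices of full column rank, and let B₁, B₂ ∈ ℝ^{K×R} be matrices with no repeated rows. If S₁·B₁ = S₂·B₂, then there exists a K×K permutation matrix P such that S₂ = S₁·P and B₂ = Pᵀ·B₁. -/
/-!
A cluster assignment matrix is the indicator matrix `S i k = [f i = k]` of a labelling `f` of the
rows (`IsClusterAssignment.exists_label`), so row `i` of `S * B` is row `f i` of `B`, and full
column rank makes `f` surjective (`surjective_of_rank_eq`). Write `f₁`, `f₂` for the two labellings: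
the hypothesis says that row `f₁ i` of `B₁` equals row `f₂ i` of `B₂` for every `i`. Choosing for
each label `k` a row `i` with `f₁ i = k` and setting `σ k = f₂ i` gives a map with
`B₁ k = B₂ (σ k)`. It is injective because `B₁` has no repeated rows, hence a permutation, and
`f₂ = σ ∘ f₁` because `B₂` has no repeated rows. The matrix of `σ` is the required `P`.
-/

open Matrix

noncomputable section

/-- `cone{Bᵀ} = {x : x = Bᵀθ, θ ≥ 0, 1ᵀθ = 1}`. -/
def coneHull {M R : ℕ} (B : Matrix (Fin M) (Fin R) ℝ) : Set (Fin R → ℝ) :=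
  {x | ∃ θ : Fin M → ℝ, (∀ i, 0 ≤ θ i) ∧ (∑ i, θ i) = 1 ∧ x = Matrix.vecMul θ B}

/-- The dual cone `cone{Bᵀ}* = {y : xᵀy ≥ 0 for all x ∈ cone{Bᵀ}}`. -/
def dualCone {M R : ℕ} (B : Matrix (Fin M) (Fin R) ℝ) : Set (Fin R → ℝ) :=
  {y | ∀ x ∈ coneHull B, 0 ≤ ∑ r, x r * y r}

/-- `C = {x : xᵀ1 ≥ √(R−1)·‖x‖₂}`. -/
def centralC (R : ℕ) : Set (Fin R → ℝ) :=
  {x | Real.sqrt ((R : ℝ) - 1) * Real.sqrt (∑ r, x r ^ 2) ≤ ∑ r, x r}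

/-- `C* = {x : xᵀ1 ≥ ‖x‖₂}`. -/
def centralCstar (R : ℕ) : Set (Fin R → ℝ) :=
  {x | Real.sqrt (∑ r, x r ^ 2) ≤ ∑ r, x r}

/-- The rows of `B` are sufficiently scattered:
(1) `cone{Bᵀ} ⊇ C`; (2) `cone{Bᵀ}* ∩ bd{C*} = {λ eₖ : λ ≥ 0, k = 1,…,R}`. -/
def SufficientlyScattered {M R : ℕ} (B : Matrix (Fin M) (Fin R) ℝ) : Prop :=
  centralC R ⊆ coneHull B ∧
  dualCone B ∩ frontier (centralCstar R) =
    {x | ∃ (l : ℝ) (k : Fin R), 0 ≤ l ∧ x = fun r => l * (if r = k then 1 else 0)}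

/-- `P` is a permutation matrix. -/
def IsPermMatrix {n : ℕ} (P : Matrix (Fin n) (Fin n) ℝ) : Prop :=
  ∃ σ : Equiv.Perm (Fin n), ∀ i j, P i j = if σ i = j then 1 else 0

/-- `S ∈ {0,1}^{M×K}` with exactly one `1` in every row. -/
def IsClusterAssignment {M K : ℕ} (S : Matrix (Fin M) (Fin K) ℝ) : Prop :=
  (∀ i k, S i k = 0 ∨ S i k = 1) ∧ ∀ i, ∃! k, S i k = 1

/-- All rows of `B` are pairwise distinct. -/
def NoRepeatedRows {M R : ℕ} (B : Matrix (Fin M) (Fin R) ℝ) : Prop :=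
  ∀ i j : Fin M, B i = B j → i = j

theorem IsClusterAssignment.exists_label {M K : ℕ} {S : Matrix (Fin M) (Fin K) ℝ}
    (hS : IsClusterAssignment S) :
    ∃ f : Fin M → Fin K, ∀ i k, S i k = if f i = k then 1 else 0 := by
  choose f hf hu using hS.2
  refine ⟨f, fun i k => ?_⟩
  split_ifs with h
  · exact h ▸ hf i
  · exact (hS.1 i k).resolve_right fun h1 => h (hu i k h1).symm

/-- A label that is never used would give a zero column, contradicting full column rank. -/
theorem surjective_of_rank_eq {M K : ℕ} {S : Matrix (Fin M) (Fin K) ℝ} {f : Fin M → Fin K}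
    (hf : ∀ i k, S i k = if f i = k then 1 else 0) (hr : S.rank = K) :
    Function.Surjective f := by
  have hli : LinearIndependent ℝ S.col := by
    rw [linearIndependent_iff_card_eq_finrank_span, Set.finrank,
      ← Matrix.rank_eq_finrank_span_cols, hr, Fintype.card_fin]
  intro k
  by_contra! hk
  refine hli.ne_zero k (funext fun i => ?_)
  simp [Matrix.col, hf, hk i]

/-- if `S₁·B₁ = S₂·B₂` then `S₂, B₂` are a common permutation of `S₁, B₁`. -/
theorem clusterAssignment_mul_eq_iff_perm
    {M K R : ℕ}
    (S1 S2 : Matrix (Fin M) (Fin K) ℝ)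
    (B1 B2 : Matrix (Fin K) (Fin R) ℝ)
    (hS1 : IsClusterAssignment S1) (hS1rank : S1.rank = K)
    (hS2 : IsClusterAssignment S2) (hS2rank : S2.rank = K)
    (hB1 : NoRepeatedRows B1) (hB2 : NoRepeatedRows B2)
    (heq : S1 * B1 = S2 * B2) :
    ∃ P : Matrix (Fin K) (Fin K) ℝ,
      IsPermMatrix P ∧ S2 = S1 * P ∧ B2 = Pᵀ * B1 := by
  obtain ⟨f1, hf1⟩ := hS1.exists_label
  obtain ⟨f2, hf2⟩ := hS2.exists_label
  have hrow : ∀ i, B1 (f1 i) = B2 (f2 i) := fun i => by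
    ext r
    simpa [Matrix.mul_apply, hf1, hf2] using congrFun (congrFun heq i) r
  choose g hg using surjective_of_rank_eq hf1 hS1rank
  have hgB : ∀ k, B1 k = B2 (f2 (g k)) := fun k => by rw [← hrow, hg]
  have hinj : Function.Injective (fun k => f2 (g k)) := fun a b hab =>
    hB1 a b (by rw [hgB a, hgB b]; exact congrArg B2 hab)
  let σ : Equiv.Perm (Fin K) := Equiv.ofBijective _ (Finite.injective_iff_bijective.mp hinj)
  have hσB : ∀ k, B1 k = B2 (σ k) := hgB
  have hσf : ∀ i, σ (f1 i) = f2 i := fun i => hB2 _ _ (by rw [← hσB, hrow])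
  refine ⟨Matrix.of fun i j => if σ i = j then 1 else 0, ⟨σ, fun _ _ => rfl⟩, ?_, ?_⟩
  · ext i j
    simp only [Matrix.mul_apply, hf1, hf2, Matrix.of_apply, ite_mul, one_mul, zero_mul,
      Finset.sum_ite_eq, Finset.mem_univ, if_true, hσf]
  · ext j r
    obtain ⟨k, rfl⟩ := σ.surjective j
    simp [Matrix.mul_apply, hσB]
end
end

section
/- Let S ∈ {0,1}^{M×K} and S′ ∈ {0,1}^{M×K′} be cluster assignment matrices of full column rank, let B ∈ ℝ^{K×R} have no repeated rows, let B′ ∈ ℝ^{K′×R}, let Π be an R×R permutation matrix, and let D be an R×R full-rank diagonal matrix. If S′·B′ = S·B·Π·D, then every row of B′ equals some row of B·Π·D, B′ has exactly K distinct rows, and if K′ > K then B′ has repeated rows. -/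
/-!
A cluster assignment matrix `S` is the matrix of a function `f` sending each row to the column
that holds its `1`, so row `i` of `S * C` is row `f i` of `C`. Full column rank makes `f`
surjective, since a zero column would break linear independence of the columns. Writing
`C = B * Pm * diagonal d`, the hypothesis becomes `B' (f' i) = C (f i)` with `f` and `f'`
surjective, so `B'` and `C` have the same set of rows. Right multiplication by the permutation and
by the invertible diagonal matrix permutes and rescales columns, hence keeps the `K` rows of `B`
distinct; the last claim is then the pigeonhole principle.
-/

open Matrix

noncomputable section

/-- The combinatorial form of a full-rank cluster assignment matrix: a surjective labelling of
the rows, under which left multiplication by `S` is reindexing of rows. -/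
theorem exists_surjective_label {M K : ℕ} {S : Matrix (Fin M) (Fin K) ℝ}
    (hS : IsClusterAssignment S) (hrank : S.rank = K) :
    ∃ f : Fin M → Fin K, Function.Surjective f ∧
      ∀ {R : ℕ} (C : Matrix (Fin K) (Fin R) ℝ) (i : Fin M), (S * C) i = C (f i) := by
  obtain ⟨h01, huniq⟩ := hS
  choose f hf hfu using huniq
  have hS_eq : ∀ i k, S i k = if k = f i then 1 else 0 := by
    intro i k
    split_ifs with h
    · rw [h]; exact hf i
    · exact (h01 i k).resolve_right fun h1 => h (hfu i k h1)
  refine ⟨f, fun k => ?_, fun C i => ?_⟩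
  · have hli : LinearIndependent ℝ S.col := by
      rw [linearIndependent_iff_card_eq_finrank_span, Set.finrank,
        ← Matrix.rank_eq_finrank_span_cols, hrank, Fintype.card_fin]
    by_contra! hk
    refine hli.ne_zero k (funext fun i => ?_)
    simpa [hS_eq] using (hk i).symm
  · ext r
    simp [Matrix.mul_apply, hS_eq]

/-- Permuting columns and scaling them by nonzero factors keeps rows distinct. -/
theorem injective_rows_mul_perm_diagonal {K R : ℕ} {B : Matrix (Fin K) (Fin R) ℝ}
    {Pm : Matrix (Fin R) (Fin R) ℝ} {d : Fin R → ℝ} (hB : NoRepeatedRows B)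
    (hPm : IsPermMatrix Pm) (hd : ∀ r, d r ≠ 0) :
    Function.Injective fun k : Fin K => (B * Pm * Matrix.diagonal d) k := by
  obtain ⟨σ, hσ⟩ := hPm
  have hentry : ∀ k r, (B * Pm * Matrix.diagonal d) k (σ r) = B k r * d (σ r) := by
    intro k r
    rw [Matrix.mul_diagonal, Matrix.mul_apply]
    simp [hσ]
  intro i j hij
  refine hB i j (funext fun r => ?_)
  have h := congrFun hij (σ r)
  simp only [hentry] at h
  exact mul_right_cancel₀ (hd _) h

/-- if `S'·B' = S·B·Π·D` with `Π` a permutation matrix and `D` a full-rank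
diagonal matrix, then every row of `B'` is a row of `B·Π·D`, `B'` has exactly `K` distinct
rows, and if `K' > K` then `B'` has repeated rows. -/
theorem rows_of_scaled_permuted_clusterAssignment
    {M K K' R : ℕ}
    (S : Matrix (Fin M) (Fin K) ℝ) (S' : Matrix (Fin M) (Fin K') ℝ)
    (B : Matrix (Fin K) (Fin R) ℝ) (B' : Matrix (Fin K') (Fin R) ℝ)
    (Pm : Matrix (Fin R) (Fin R) ℝ) (d : Fin R → ℝ)
    (hS : IsClusterAssignment S) (hSrank : S.rank = K)
    (hS' : IsClusterAssignment S') (hS'rank : S'.rank = K')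
    (hB : NoRepeatedRows B)
    (hPm : IsPermMatrix Pm) (hd : ∀ r, d r ≠ 0)
    (heq : S' * B' = S * B * Pm * Matrix.diagonal d) :
    (∀ i : Fin K', ∃ k : Fin K, B' i = (B * Pm * Matrix.diagonal d) k) ∧
    (Set.range fun i : Fin K' => B' i).ncard = K ∧
    (K < K' → ∃ i j : Fin K', i ≠ j ∧ B' i = B' j) := by
  obtain ⟨f, hf, hSf⟩ := exists_surjective_label hS hSrank
  obtain ⟨f', hf', hSf'⟩ := exists_surjective_label hS' hS'rank
  have hinj := injective_rows_mul_perm_diagonal hB hPm hd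
  have hrow : ∀ i, B' (f' i) = (B * Pm * Matrix.diagonal d) (f i) := by
    intro i
    have h := congrFun heq i
    rw [show S * B * Pm * Matrix.diagonal d = S * (B * Pm * Matrix.diagonal d) by
      simp only [Matrix.mul_assoc]] at h
    exact (hSf' B' i).symm.trans (h.trans (hSf _ i))
  have hmem : ∀ i : Fin K', ∃ k : Fin K, B' i = (B * Pm * Matrix.diagonal d) k := by
    intro i
    obtain ⟨m, rfl⟩ := hf' i
    exact ⟨f m, hrow m⟩
  have hrange : (Set.range fun i : Fin K' => B' i) =
      Set.range fun k : Fin K => (B * Pm * Matrix.diagonal d) k := by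
    ext x
    constructor
    · rintro ⟨i, rfl⟩
      obtain ⟨k, hk⟩ := hmem i
      exact ⟨k, hk.symm⟩
    · rintro ⟨k, rfl⟩
      obtain ⟨m, rfl⟩ := hf k
      exact ⟨f' m, hrow m⟩
  refine ⟨hmem, ?_, fun hlt => ?_⟩
  · rw [hrange, ← Set.image_univ, Set.ncard_image_of_injective _ hinj, Set.ncard_univ,
      Nat.card_eq_fintype_card, Fintype.card_fin]
  · choose g hg using hmem
    obtain ⟨i, j, hne, hij⟩ := Fintype.exists_ne_map_eq_of_card_lt g (by simpa using hlt)
    exact ⟨i, j, hne, by rw [hg i, hg j, hij]⟩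
end
end
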